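/- arXiv:1201.1633 — 9 statements merged into one kernel-verified Lean document; each statement's English description precedes it below -/
import Mathlib

section
/- Let d : Σ* × Σ* → ℤ≥0 be a mapping whose restriction to Σ_n × Σ_n is a metric for every n ≥ 0, and suppose that (1) d(u,v) ≤ n for all words u, v with l(u) = l(v) = n, and (2) d(u₁v₁, u₂v₂) = d(u₁,u₂) + d(v₁,v₂) whenever l(u₁) = l(u₂) and l(v₁) = l(v₂) (where juxtaposition denotes concatenation). Then d(u,v) = H(u,v) for all words u, v of equal length, where H is the Hamming distance. -/
/-- The Hamming distance between two words of equal length: the number of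
positions at which they differ (computed via `zip`, which truncates to the
common length, so this is also the truncated Hamming function). -/
def hamming {α : Type*} [DecidableEq α] (u v : List α) : ℕ :=
  (u.zip v).countP (fun p => decide (p.1 ≠ p.2))

theorem stmt_0 {A : Type*} [DecidableEq A]
    (d : List A → List A → ℕ)
    (hrefl : ∀ u v : List A, u.length = v.length → (d u v = 0 ↔ u = v))
    (hsymm : ∀ u v : List A, u.length = v.length → d u v = d v u)
    (htri : ∀ u v w : List A, u.length = v.length → v.length = w.length →
      d u w ≤ d u v + d v w)
    (hbound : ∀ u v : List A, u.length = v.length → d u v ≤ u.length)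
    (hadd : ∀ u₁ u₂ v₁ v₂ : List A, u₁.length = u₂.length → v₁.length = v₂.length →
      d (u₁ ++ v₁) (u₂ ++ v₂) = d u₁ u₂ + d v₁ v₂) :
    ∀ u v : List A, u.length = v.length → d u v = hamming u v := by
  intro u
  induction u with
  | nil =>
    intro v h
    cases v with
    | nil => simpa [hamming] using (hrefl [] [] rfl).2 rfl
    | cons b v => simp at h
  | cons a u ih =>
    intro v h
    cases v with
    | nil => simp at h
    | cons b v =>
      have hl : u.length = v.length := by simpa using h
      have h1 := hadd [a] [b] u v rfl hl
      have h2 := hrefl [a] [b] rfl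
      have h3 := hbound [a] [b] rfl
      have h4 := ih v hl
      simp only [List.cons_append, List.nil_append] at h1
      simp only [List.length_cons, List.length_nil, List.cons.injEq, and_true] at h2 h3
      have h5 : hamming (a :: u) (b :: v) = hamming u v + if a = b then 0 else 1 := by
        by_cases hab : a = b <;> simp [hamming, hab]
      rw [h1, h5, h4]
      split_ifs with hab
      · have := h2.2 hab
        omega
      · have : d [a] [b] ≠ 0 := fun h => hab (h2.1 h)
        omega
end

section
/- The function T(u,v) := H(ū,v̄) + |l(u) − l(v)| is an integer-valued metric on Σ* (i.e., T(u,v) = 0 iff u = v, T is symmetric, and T satisfies the triangle inequality), and T is Hamming compatible, i.e., T(u,v) = H(u,v) whenever l(u) = l(v). -/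
/-- The metric `T(u,v) = H(ū,v̄) + |l(u) − l(v)|`. -/
def Tmet {α : Type*} [DecidableEq α] (u v : List α) : ℕ :=
  hamming u v + Nat.dist u.length v.length

theorem Tmet_nil_left {A : Type*} [DecidableEq A] (v : List A) : Tmet [] v = v.length := by
  simp [Tmet, hamming, Nat.dist]

theorem Tmet_nil_right {A : Type*} [DecidableEq A] (v : List A) : Tmet v [] = v.length := by
  simp [Tmet, hamming, Nat.dist]

theorem Tmet_cons {A : Type*} [DecidableEq A] (a b : A) (u v : List A) :
    Tmet (a :: u) (b :: v) = Tmet u v + if a = b then 0 else 1 := by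
  by_cases h : a = b <;> simp [Tmet, hamming, Nat.dist, List.countP_cons, h] <;> omega

theorem Tmet_le {A : Type*} [DecidableEq A] (u v : List A) :
    Tmet u v ≤ u.length + v.length := by
  have h : hamming u v ≤ (u.zip v).length := List.countP_le_length
  rw [List.length_zip] at h
  simp only [Tmet, Nat.dist]
  omega

theorem Tmet_tri {A : Type*} [DecidableEq A] (u : List A) :
    ∀ v w : List A, Tmet u v ≤ Tmet u w + Tmet w v := by
  induction u with
  | nil =>
    intro v w
    simp only [Tmet_nil_left]
    simp only [Tmet, Nat.dist]
    omega
  | cons a u ih =>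
    intro v w
    cases w with
    | nil =>
      simp only [Tmet_nil_left, Tmet_nil_right]
      exact Tmet_le _ _
    | cons c w =>
      cases v with
      | nil =>
        simp only [Tmet_nil_right]
        simp only [Tmet, Nat.dist]
        omega
      | cons b v =>
        have := ih v w
        simp only [Tmet_cons]
        have key : (if a = b then 0 else 1) ≤
            (if a = c then 0 else 1) + (if c = b then 0 else 1) := by
          split_ifs
          all_goals first | omega | (exfalso; simp_all)
        omega

theorem Tmet_zero {A : Type*} [DecidableEq A] (u : List A) :
    ∀ v : List A, Tmet u v = 0 ↔ u = v := by
  induction u with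
  | nil => intro v; cases v <;> simp [Tmet_nil_left]
  | cons a u ih =>
    intro v
    cases v with
    | nil => simp [Tmet_nil_right]
    | cons b v => simp [Tmet_cons, ih, and_comm]

theorem Tmet_symm {A : Type*} [DecidableEq A] (u : List A) :
    ∀ v : List A, Tmet u v = Tmet v u := by
  induction u with
  | nil => intro v; simp [Tmet_nil_left, Tmet_nil_right]
  | cons a u ih =>
    intro v
    cases v with
    | nil => simp [Tmet_nil_left, Tmet_nil_right]
    | cons b v => simp [Tmet_cons, ih v, eq_comm]

theorem stmt_2 {A : Type*} [DecidableEq A] :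
    (∀ u v : List A, Tmet u v = 0 ↔ u = v) ∧
    (∀ u v : List A, Tmet u v = Tmet v u) ∧
    (∀ u v w : List A, Tmet u v ≤ Tmet u w + Tmet w v) ∧
    (∀ u v : List A, u.length = v.length → Tmet u v = hamming u v) := by
  exact ⟨fun u => Tmet_zero u, fun u => Tmet_symm u, fun u => Tmet_tri u,
    fun u v h => by simp [Tmet, h, Nat.dist]⟩
end

section
/- For every integer n ≥ 3, if |Σ| ≥ 2 then the function d_n(u,v) := H(ū,v̄) + ⌈|l(u) − l(v)|/n⌉ is not a metric on Σ*: there exist words u, v, w ∈ Σ* with d_n(u,v) > d_n(u,w) + d_n(w,v). (For distinct letters 0, 1 ∈ Σ one may take w = 0ⁿ, u = 0²ⁿ, v = 0ⁿ1ⁿ0ⁿ, giving d_n(u,v) = n+1, d_n(u,w) = 1, d_n(v,w) = 2.) -/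
/-- The function `d_n(u,v) = H(ū,v̄) + ⌈|l(u) − l(v)|/n⌉`
(for `n ≥ 1`, `⌈m/n⌉ = (m + n - 1)/n` in natural-number division). -/
def dn {α : Type*} [DecidableEq α] (n : ℕ) (u v : List α) : ℕ :=
  hamming u v + (Nat.dist u.length v.length + n - 1) / n

theorem aux_app {A : Type*} [DecidableEq A] (n : ℕ) (a c : A) (x y : List A) :
    hamming (List.replicate n a ++ x) (List.replicate n c ++ y)
      = (if a = c then 0 else n) + hamming x y := by
  unfold hamming
  rw [List.zip_append (by simp), List.countP_append]
  congr 1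
  by_cases h : a = c <;> simp [List.zip_replicate, List.countP_replicate, h]

theorem aux_nil {A : Type*} [DecidableEq A] (x : List A) : hamming x [] = 0 := by
  simp [hamming]

theorem aux_nil2 {A : Type*} [DecidableEq A] (x : List A) : hamming [] x = 0 := by
  simp [hamming]

theorem aux_main {A : Type*} [DecidableEq A] (n : ℕ) (hn : 3 ≤ n) (a b : A) (hab : a ≠ b) :
      dn n (List.replicate (2 * n) a)
        (List.replicate n a ++ List.replicate n b ++ List.replicate n a) = n + 1 ∧
      dn n (List.replicate (2 * n) a) (List.replicate n a) = 1 ∧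
      dn n (List.replicate n a ++ List.replicate n b ++ List.replicate n a)
        (List.replicate n a) = 2 ∧
      dn n (List.replicate n a)
        (List.replicate n a ++ List.replicate n b ++ List.replicate n a) = 2 := by
  have e1 : List.replicate (2 * n) a
      = List.replicate n a ++ (List.replicate n a ++ []) := by
    rw [two_mul, List.replicate_add, List.append_nil]
  have e2 : List.replicate n a = List.replicate n a ++ [] := by simp
  have d1 : (n + n - 1) / n = 1 := by
    rw [Nat.div_eq_iff (by omega)]; omega
  have d2 : (2 * n + n - 1) / n = 2 := by
    rw [Nat.div_eq_iff (by omega)]; omega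
  have h1 : hamming (List.replicate (2 * n) a)
        (List.replicate n a ++ List.replicate n b ++ List.replicate n a) = n := by
    rw [e1, List.append_assoc, aux_app, aux_app, aux_nil2]; simp [hab]
  have h2 : hamming (List.replicate (2 * n) a) (List.replicate n a) = 0 := by
    rw [e1]; conv_lhs => rw [e2]
    simp only [List.append_assoc, aux_app, aux_nil]; simp [aux_nil]
  have h3 : hamming (List.replicate n a ++ List.replicate n b ++ List.replicate n a)
        (List.replicate n a) = 0 := by
    have := aux_app n a a (List.replicate n b ++ List.replicate n a) []
    rw [aux_nil] at this
    simpa using this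
  have h4 : hamming (List.replicate n a)
      (List.replicate n a ++ List.replicate n b ++ List.replicate n a) = 0 := by
    have := aux_app n a a [] (List.replicate n b ++ List.replicate n a)
    rw [aux_nil2] at this
    simpa using this
  unfold dn
  rw [h1, h2, h3, h4]
  simp only [List.length_append, List.length_replicate]
  have f1 : Nat.dist (2 * n) (n + n + n) = n := by unfold Nat.dist; omega
  have f2 : Nat.dist (2 * n) n = n := by unfold Nat.dist; omega
  have f3 : Nat.dist (n + n + n) n = 2 * n := by unfold Nat.dist; omega
  have f4 : Nat.dist n (n + n + n) = 2 * n := by unfold Nat.dist; omega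
  rw [f1, f2, f3, f4, d1, d2]
  simp

theorem stmt_3 {A : Type*} [DecidableEq A] [Fintype A]
    (hA : 2 ≤ Fintype.card A) (n : ℕ) (hn : 3 ≤ n) :
    (∃ u v w : List A, dn n u w + dn n w v < dn n u v) ∧
    ∀ a b : A, a ≠ b →
      dn n (List.replicate (2 * n) a)
        (List.replicate n a ++ List.replicate n b ++ List.replicate n a) = n + 1 ∧
      dn n (List.replicate (2 * n) a) (List.replicate n a) = 1 ∧
      dn n (List.replicate n a ++ List.replicate n b ++ List.replicate n a)
        (List.replicate n a) = 2 := by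
  refine ⟨?_, fun a b hab => ?_⟩
  · obtain ⟨a, b, hab⟩ := Fintype.one_lt_card_iff.mp hA
    obtain ⟨h1, h2, _, h4⟩ := aux_main n hn a b hab
    refine ⟨List.replicate (2 * n) a,
      List.replicate n a ++ List.replicate n b ++ List.replicate n a, List.replicate n a, ?_⟩
    rw [h1, h2, h4]; omega
  · obtain ⟨h1, h2, h3, _⟩ := aux_main n hn a b hab
    exact ⟨h1, h2, h3⟩
end

section
/- The function d_2(u,v) := H(ū,v̄) + ⌈|l(u) − l(v)|/2⌉ is an integer-valued metric on Σ*: d_2(u,v) = 0 iff u = v, d_2 is symmetric, and d_2(u,v) ≤ d_2(u,w) + d_2(w,v) for all words u, v, w ∈ Σ*. -/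
/-- The metric `d₂(u,v) = H(ū,v̄) + ⌈|l(u) − l(v)|/2⌉`
(note `⌈m/2⌉ = (m + 1)/2` in natural-number division). -/
def d2 {α : Type*} [DecidableEq α] (u v : List α) : ℕ :=
  hamming u v + (Nat.dist u.length v.length + 1) / 2

theorem ham_cons {A : Type*} [DecidableEq A] (a b : A) (u v : List A) :
    hamming (a :: u) (b :: v) = hamming u v + if a ≠ b then 1 else 0 := by
  simp [hamming, List.countP_cons]

theorem ham_nil_left {A : Type*} [DecidableEq A] (v : List A) :
    hamming ([] : List A) v = 0 := by
  simp [hamming]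

theorem ham_nil_right {A : Type*} [DecidableEq A] (v : List A) :
    hamming v ([] : List A) = 0 := by
  simp [hamming]

theorem ham_comm {A : Type*} [DecidableEq A] (u v : List A) :
    hamming u v = hamming v u := by
  induction u generalizing v with
  | nil => simp [ham_nil_left, ham_nil_right]
  | cons a u ih =>
    cases v with
    | nil => simp [ham_nil_left, ham_nil_right]
    | cons b v => simp only [ham_cons, ih v, ne_comm]

theorem ham_le {A : Type*} [DecidableEq A] (u v : List A) :
    hamming u v ≤ min u.length v.length := by
  unfold hamming
  exact List.countP_le_length.trans (by simp)

theorem ham_eq {A : Type*} [DecidableEq A] (u v : List A)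
    (hl : u.length = v.length) (h : hamming u v = 0) : u = v := by
  induction u generalizing v with
  | nil => cases v <;> simp_all
  | cons a u ih =>
    cases v with
    | nil => simp at hl
    | cons b v =>
      rw [ham_cons] at h
      have h1 := ih v (by simpa using hl) (by omega)
      by_cases hab : a = b
      · rw [hab, h1]
      · simp [hab] at h

theorem ham_self {A : Type*} [DecidableEq A] (u : List A) : hamming u u = 0 := by
  induction u with
  | nil => simp [ham_nil_left]
  | cons a u ih => simp [ham_cons, ih]

theorem ham_tri {A : Type*} [DecidableEq A] (u v w : List A) :
    hamming u v ≤ hamming u w + hamming w v + (min u.length v.length - w.length) := by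
  induction w generalizing u v with
  | nil => have := ham_le u v; simp only [List.length_nil]; omega
  | cons c w ih =>
    cases u with
    | nil => simp [ham_nil_left]
    | cons a u =>
      cases v with
      | nil => simp [ham_nil_right]
      | cons b v =>
        have := ih u v
        simp only [ham_cons, List.length_cons]
        have h : (if a ≠ b then 1 else 0) ≤ (if a ≠ c then 1 else 0) + (if c ≠ b then 1 else 0) := by
          by_cases h1 : a = c
          · subst h1; simp
          · simp only [ne_eq, h1, not_false_eq_true, if_true]; split_ifs <;> omega
        omega

theorem stmt_4 {A : Type*} [DecidableEq A] :
    (∀ u v : List A, d2 u v = 0 ↔ u = v) ∧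
    (∀ u v : List A, d2 u v = d2 v u) ∧
    (∀ u v w : List A, d2 u v ≤ d2 u w + d2 w v) := by
  refine ⟨fun u v => ⟨fun h => ?_, fun h => ?_⟩, fun u v => ?_, fun u v w => ?_⟩
  · unfold d2 Nat.dist at h
    exact ham_eq u v (by omega) (by omega)
  · subst h
    simp [d2, ham_self, Nat.dist_self]
  · unfold d2
    rw [ham_comm, Nat.dist_comm]
  · have := ham_tri u v w
    unfold d2 Nat.dist
    omega
end

section
/- Let u be a word of length k over an alphabet Σ with N letters, let r ≥ 0, let j ≤ k, and set a = ⌈(k − j)/2⌉. If a ≤ r, then the cardinality of S_r^j(u) = {v ∈ Σ_j : d_2(u,v) = r} equals C(j, r − a)·(N − 1)^{r − a}, where C(j, r − a) is the binomial coefficient. -/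
theorem core_count {A : Type*} [DecidableEq A] [Fintype A] (j : ℕ) :
    ∀ (u : List A) (m : ℕ), j ≤ u.length →
    {v : List A | v.length = j ∧ hamming u v = m}.ncard =
      Nat.choose j m * (Fintype.card A - 1) ^ m := by
  induction j with
  | zero =>
    intro u m _
    rcases m with _ | m
    · have : {v : List A | v.length = 0 ∧ hamming u v = 0} = {[]} := by
        ext v
        simp only [Set.mem_ofPred_eq, Set.mem_singleton_iff, List.length_eq_zero_iff]
        constructor
        · exact fun h => h.1
        · rintro rfl
          simp [hamming]
      rw [this]; simp
    · have : {v : List A | v.length = 0 ∧ hamming u v = m + 1} = ∅ := by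
        ext v
        simp only [Set.mem_ofPred_eq, Set.mem_empty_iff_false, List.length_eq_zero_iff, iff_false]
        rintro ⟨rfl, h⟩
        simp [hamming] at h
      rw [this]; simp
  | succ j ih =>
    intro u m hu
    rcases u with _ | ⟨x, u⟩
    · simp at hu
    have hu' : j ≤ u.length := by simpa using hu
    have hc : ∀ y v, hamming (x :: u) (y :: v) = hamming u v + if x ≠ y then 1 else 0 := by
      intro y v
      simp [hamming, List.countP_cons]
    have hfin : ∀ m, {v : List A | v.length = j ∧ hamming u v = m}.Finite := fun m =>
      (List.finite_length_eq A j).subset (fun v h => h.1)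
    have hinj : Function.Injective (fun v : List A => x :: v) := List.cons_injective
    rcases m with _ | m
    · have : {v : List A | v.length = j + 1 ∧ hamming (x :: u) v = 0} =
          (fun v => x :: v) '' {v : List A | v.length = j ∧ hamming u v = 0} := by
        ext v
        rcases v with _ | ⟨y, v⟩
        · simp
        · by_cases h : x = y
          · subst h
            simp [hc]
          · simp [hc, h]
      rw [this, Set.ncard_image_of_injective _ hinj, ih u 0 hu']; simp
    · have : {v : List A | v.length = j + 1 ∧ hamming (x :: u) v = m + 1} =
          (fun v => x :: v) '' {v : List A | v.length = j ∧ hamming u v = m + 1} ∪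
          (fun p : A × List A => p.1 :: p.2) ''
            ({x}ᶜ ×ˢ {v : List A | v.length = j ∧ hamming u v = m}) := by
        ext v
        rcases v with _ | ⟨y, v⟩
        · simp
        · by_cases h : x = y
          · subst h
            simp [hc]
          · simp [hc, h, Ne.symm h]
      rw [this, Set.ncard_union_eq ?_ ((hfin _).image _)
        (((Set.toFinite _).prod (hfin _)).image _), Set.ncard_image_of_injective _ hinj,
        Set.ncard_image_of_injective, Set.ncard_prod, ih u _ hu', ih u _ hu',
        Set.ncard_compl, Set.ncard_singleton, Nat.card_eq_fintype_card, Nat.choose_succ_succ]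
      · ring
      · rintro ⟨a, b⟩ ⟨c, d⟩ h
        simpa using h
      · rw [Set.disjoint_left]
        rintro _ ⟨v, _, rfl⟩ ⟨⟨y, w⟩, ⟨hy, _⟩, h⟩
        simp at h hy
        exact hy h.1

theorem stmt_7 {A : Type*} [DecidableEq A] [Fintype A]
    (u : List A) (k r j a : ℕ) (hk : u.length = k) (hj : j ≤ k)
    (ha : a = (k - j + 1) / 2) (har : a ≤ r) :
    {v : List A | v.length = j ∧ d2 u v = r}.ncard =
      Nat.choose j (r - a) * (Fintype.card A - 1) ^ (r - a) := by
  rw [← core_count j u (r - a) (hk ▸ hj)]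
  congr 1
  ext v
  simp only [Set.mem_ofPred_eq, d2]
  refine and_congr_right fun hv => ?_
  rw [hv, hk, Nat.dist_eq_sub_of_le_right hj, ← ha]
  omega
end

section
/- Let u be a word of length k over an alphabet Σ with N letters, let r ≥ 0, let j > k, and set a = ⌈(j − k)/2⌉. If a ≤ r, then the cardinality of S_r^j(u) = {v ∈ Σ_j : d_2(u,v) = r} equals C(k, r − a)·(N − 1)^{r − a}·N^{j − k}, where C(k, r − a) is the binomial coefficient. -/
theorem hamming_count {A : Type*} [DecidableEq A] [Fintype A] (m : ℕ) (u : List A) :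
    ∀ s : ℕ, {v : List A | v.length = u.length + m ∧ hamming u v = s}.ncard =
      Nat.choose u.length s * (Fintype.card A - 1) ^ s * Fintype.card A ^ m := by
  induction u with
  | nil =>
    intro s
    cases s with
    | zero =>
      have h : {v : List A | v.length = ([] : List A).length + m ∧ hamming [] v = 0}
          = {v : List A | v.length = m} := by
        ext v; simp [hamming]
      rw [h]
      have h2 : {v : List A | v.length = m}.ncard = Nat.card (List.Vector A m) := rfl
      rw [h2, Nat.card_eq_fintype_card, card_vector]
      simp
    | succ s =>
      have h : {v : List A | v.length = ([] : List A).length + m ∧ hamming [] v = s + 1}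
          = ∅ := by
        ext v; simp [hamming]
      rw [h]; simp
  | cons x u ih =>
    have hfin : ∀ s, {v : List A | v.length = u.length + m ∧ hamming u v = s}.Finite :=
      fun s => (List.finite_length_eq A (u.length + m)).subset (fun v hv => hv.1)
    have hc : ∀ b v, hamming (x :: u) (b :: v) = hamming u v + if x = b then 0 else 1 := by
      intro b v
      by_cases hxb : x = b <;> simp [hamming, List.countP_cons, hxb]
    intro s
    cases s with
    | zero =>
      have h : {v : List A | v.length = (x :: u).length + m ∧ hamming (x :: u) v = 0}
          = (List.cons x) '' {v : List A | v.length = u.length + m ∧ hamming u v = 0} := by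
        ext v
        cases v with
        | nil => simp; omega
        | cons b v =>
          simp only [Set.mem_setOf_eq, hc, List.length_cons, Set.mem_image, List.cons.injEq]
          by_cases hxb : x = b
          · simp [hxb]; omega
          · simp [hxb]
      rw [h, Set.ncard_image_of_injective _ List.cons_injective, ih]
      simp
    | succ s =>
      have h : {v : List A | v.length = (x :: u).length + m ∧ hamming (x :: u) v = s + 1}
          = (List.cons x) '' {v : List A | v.length = u.length + m ∧ hamming u v = s + 1}
          ∪ (fun p : A × List A => p.1 :: p.2) ''
            (({x}ᶜ : Set A) ×ˢ {v : List A | v.length = u.length + m ∧ hamming u v = s}) := by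
        ext v
        cases v with
        | nil => simp; omega
        | cons b v =>
          simp only [Set.mem_setOf_eq, hc, List.length_cons, Set.mem_image, List.cons.injEq,
            Set.mem_union, Set.mem_prod, Prod.exists, Set.mem_compl_iff, Set.mem_singleton_iff]
          by_cases hxb : x = b
          · subst hxb
            constructor
            · rintro ⟨h1, h2⟩
              exact Or.inl ⟨v, ⟨by omega, by simpa using h2⟩, rfl, rfl⟩
            · rintro (⟨w, ⟨h1, h2⟩, -, rfl⟩ | ⟨c, w, ⟨h0, -⟩, h3, -⟩)
              · exact ⟨by omega, by simpa using h2⟩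
              · exact absurd h3 h0
          · constructor
            · rintro ⟨h1, h2⟩
              exact Or.inr ⟨b, v, ⟨fun h => hxb h.symm, by omega, by simpa [hxb] using h2⟩, rfl, rfl⟩
            · rintro (⟨w, -, h3, -⟩ | ⟨c, w, ⟨h0, h1, h2⟩, rfl, rfl⟩)
              · exact absurd h3 hxb
              · exact ⟨by omega, by simpa [hxb] using h2⟩
      have hinj : Function.Injective (fun p : A × List A => p.1 :: p.2) := by
        rintro ⟨a, v⟩ ⟨b, w⟩ h
        simpa using h
      rw [h, Set.ncard_union_eq ?_ ((hfin _).image _) (((Set.toFinite _).prod (hfin _)).image _),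
        Set.ncard_image_of_injective _ List.cons_injective,
        Set.ncard_image_of_injective _ hinj, Set.ncard_prod, ih, ih]
      · have h1 : ({x}ᶜ : Set A).ncard = Fintype.card A - 1 := by
          rw [Set.ncard_compl, Set.ncard_singleton, Nat.card_eq_fintype_card]
        rw [h1, List.length_cons, Nat.choose_succ_succ]
        ring
      · rw [Set.disjoint_left]
        rintro _ ⟨v, -, rfl⟩ ⟨⟨b, w⟩, ⟨hb, -⟩, hbw⟩
        simp at hbw hb
        exact hb hbw.1

theorem stmt_8 {A : Type*} [DecidableEq A] [Fintype A]
    (u : List A) (k r j a : ℕ) (hk : u.length = k) (hj : k < j)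
    (ha : a = (j - k + 1) / 2) (har : a ≤ r) :
    {v : List A | v.length = j ∧ d2 u v = r}.ncard =
      Nat.choose k (r - a) * (Fintype.card A - 1) ^ (r - a) *
        Fintype.card A ^ (j - k) := by
  subst hk
  rw [← hamming_count (j - u.length) u (r - a)]
  congr 1
  ext v
  simp only [Set.mem_setOf_eq, d2, Nat.dist]
  constructor
  · rintro ⟨h1, h2⟩
    rw [h1] at h2
    constructor <;> omega
  · rintro ⟨h1, h2⟩
    rw [h1]
    constructor <;> omega
end

section
/- Let δ be an integer-valued Hamming compatible metric on Σ*, where |Σ| ≥ 2, and suppose δ is weakly uniform. Then δ(u,ε) ≥ l(u)/2 for every word u ∈ Σ*, i.e., 2·δ(u,ε) ≥ l(u). -/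
theorem stmt_10 {A : Type*} [DecidableEq A] [Fintype A]
    (hA : 2 ≤ Fintype.card A)
    (δ : List A → List A → ℕ)
    -- δ is a metric on Σ*
    (hrefl : ∀ u v : List A, δ u v = 0 ↔ u = v)
    (hsymm : ∀ u v : List A, δ u v = δ v u)
    (htri : ∀ u v w : List A, δ u v ≤ δ u w + δ w v)
    -- δ is Hamming compatible
    (hcompat : ∀ u v : List A, u.length = v.length → δ u v = hamming u v)
    -- δ is weakly uniform: Hamming opposites are equidistant from the empty word
    (hwu : ∀ u v : List A, u.length = v.length → hamming u v = u.length →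
      δ u [] = δ v []) :
    ∀ u : List A, u.length ≤ 2 * δ u [] := by
  intro u
  have hne : ∀ x : A, ∃ y : A, x ≠ y := by
    intro x
    haveI : Nontrivial A := Fintype.one_lt_card_iff_nontrivial.mp (by omega)
    obtain ⟨y, hy⟩ := exists_ne x
    exact ⟨y, hy.symm⟩
  choose f hf using hne
  have hlen : u.length = (u.map f).length := by simp
  have hham : ∀ w : List A, hamming w (w.map f) = w.length := by
    intro w
    induction w with
    | nil => simp [hamming]
    | cons a t ih =>
      unfold hamming at ih ⊢
      rw [List.map_cons, List.zip_cons_cons, List.countP_cons, ih]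
      simp [hf a]
  have h1 := hcompat u (u.map f) hlen
  have h2 := hwu u (u.map f) hlen (hham u)
  have h3 := htri u (u.map f) []
  have h4 := hsymm [] (u.map f)
  have h5 := hham u
  omega
end

section
/- Let Σ be an alphabet with |Σ| ≥ 2 and let δ be any integer-valued Hamming compatible metric on Σ* (no uniformity assumed). For all words u, w ∈ Σ* with l(u) ≥ l(w), there exists a Hamming opposite v of u satisfying H(ū,w̄) + H(v̄,w̄) = l(w), such that δ(u,w) ≥ d_2(u,w) or δ(v,w) ≥ d_2(v,w). In particular, for every word w and every n ≥ l(w) there exists a word u of length n with δ(u,w) ≥ d_2(u,w). -/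
theorem exists_opp {A : Type*} [DecidableEq A] (h : ∀ a : A, ∃ b, a ≠ b) (u : List A) :
    ∀ w : List A, w.length ≤ u.length → ∃ v : List A, v.length = u.length ∧
      hamming u v = u.length ∧ hamming u w + hamming v w = w.length := by
  induction u with
  | nil =>
    intro w hw
    refine ⟨[], rfl, by simp [hamming], ?_⟩
    simp [hamming] at hw ⊢
    simp [hw]
  | cons a u ih =>
    intro w hw
    obtain ⟨b, hb⟩ := h a
    cases w with
    | nil =>
      obtain ⟨v, h1, h2, h3⟩ := ih [] (by simp)
      refine ⟨b :: v, by simp [h1], ?_, by simp [hamming]⟩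
      simp only [hamming] at h2
      simp [hamming, List.countP_cons, hb] at h2 ⊢
      exact h2
    | cons c w =>
      obtain ⟨v, h1, h2, h3⟩ := ih w (by simpa using hw)
      simp only [hamming] at h2 h3
      by_cases hc : a = c
      · subst hc
        refine ⟨b :: v, by simp [h1], ?_, ?_⟩
        · simp only [hamming, List.zip_cons_cons, List.countP_cons, h2]
          simp [hb]
        · simp only [hamming, List.zip_cons_cons, List.countP_cons, List.length_cons, ← h3]
          simp [hb.symm]
          omega
      · refine ⟨c :: v, by simp [h1], ?_, ?_⟩
        · simp only [hamming, List.zip_cons_cons, List.countP_cons, h2]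
          simp [hc]
        · simp only [hamming, List.zip_cons_cons, List.countP_cons, List.length_cons, ← h3]
          simp [hc]
          omega

theorem stmt_14 {A : Type*} [DecidableEq A] [Fintype A]
    (hA : 2 ≤ Fintype.card A)
    (δ : List A → List A → ℕ)
    -- δ is a metric on Σ*
    (hrefl : ∀ u v : List A, δ u v = 0 ↔ u = v)
    (hsymm : ∀ u v : List A, δ u v = δ v u)
    (htri : ∀ u v w : List A, δ u v ≤ δ u w + δ w v)
    -- δ is Hamming compatible
    (hcompat : ∀ u v : List A, u.length = v.length → δ u v = hamming u v) :
    (∀ u w : List A, w.length ≤ u.length →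
      ∃ v : List A, v.length = u.length ∧ hamming u v = u.length ∧
        hamming u w + hamming v w = w.length ∧
        (d2 u w ≤ δ u w ∨ d2 v w ≤ δ v w)) ∧
    ∀ (w : List A) (n : ℕ), w.length ≤ n →
      ∃ u : List A, u.length = n ∧ d2 u w ≤ δ u w := by
  have hnt : Nontrivial A := Fintype.one_lt_card_iff_nontrivial.mp hA
  have key : ∀ u w : List A, w.length ≤ u.length →
      ∃ v : List A, v.length = u.length ∧ hamming u v = u.length ∧
        hamming u w + hamming v w = w.length ∧
        (d2 u w ≤ δ u w ∨ d2 v w ≤ δ v w) := by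
    intro u w hw
    obtain ⟨v, h1, h2, h3⟩ := exists_opp (fun a => (exists_ne a).imp fun _ h => h.symm) u w hw
    refine ⟨v, h1, h2, h3, ?_⟩
    have t := htri u v w
    rw [hcompat u v h1.symm, h2, hsymm w v] at t
    simp only [d2, h1, Nat.dist]
    omega
  refine ⟨key, ?_⟩
  intro w n hn
  obtain ⟨a, -⟩ := exists_pair_ne A
  obtain ⟨v, h1, -, -, h⟩ := key (List.replicate n a) w (by simpa using hn)
  rcases h with h | h
  · exact ⟨_, by simp, h⟩
  · exact ⟨v, by simpa using h1, h⟩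
end

section
/- Let Σ = {0,1} be the binary alphabet and let δ be any integer-valued Hamming compatible metric on Σ*. Then for every word w and every n ≥ l(w), at least half of the words of length n satisfy the inequality δ(u,w) ≥ d_2(u,w); that is, |{u ∈ Σ_n : δ(u,w) ≥ d_2(u,w)}| ≥ 2^{n−1}. -/
theorem ham_not_self (u : List Bool) : hamming u (u.map not) = u.length := by
  induction u with
  | nil => rfl
  | cons a u ih =>
    simp only [hamming, List.map_cons, List.zip_cons_cons, List.countP_cons, List.length_cons] at ih ⊢
    rw [ih]; cases a <;> simp

theorem ham_add (w : List Bool) : ∀ u : List Bool, w.length ≤ u.length →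
    hamming u w + hamming (u.map not) w = w.length := by
  induction w with
  | nil => intro u _; simp [hamming]
  | cons b w ih =>
    intro u hu
    cases u with
    | nil => simp at hu
    | cons a u =>
      have := ih u (by simpa using hu)
      simp only [hamming, List.map_cons, List.zip_cons_cons, List.countP_cons, List.length_cons] at this ⊢
      rw [← this]; cases a <;> cases b <;> simp <;> omega

theorem words_ncard (n : ℕ) : {u : List Bool | u.length = n}.ncard = 2 ^ n := by
  have h : Nat.card (List.Vector Bool n) = 2 ^ n := by
    rw [Nat.card_eq_fintype_card, card_vector]; simp
  rw [← h]; rfl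

theorem stmt_16
    (δ : List Bool → List Bool → ℕ)
    -- δ is a metric on Σ* for the binary alphabet Σ = {0,1}
    (hrefl : ∀ u v : List Bool, δ u v = 0 ↔ u = v)
    (hsymm : ∀ u v : List Bool, δ u v = δ v u)
    (htri : ∀ u v w : List Bool, δ u v ≤ δ u w + δ w v)
    -- δ is Hamming compatible
    (hcompat : ∀ u v : List Bool, u.length = v.length → δ u v = hamming u v) :
    ∀ (w : List Bool) (n : ℕ), w.length ≤ n →
      2 ^ (n - 1) ≤ {u : List Bool | u.length = n ∧ d2 u w ≤ δ u w}.ncard := by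
  intro w n hn
  set G := {u : List Bool | u.length = n ∧ d2 u w ≤ δ u w} with hG
  have hfin : G.Finite := (List.finite_length_eq Bool n).subset (fun u hu => hu.1)
  have hinv : ∀ u : List Bool, (u.map not).map not = u := by
    intro u; simp [Function.comp_def]
  have hsub : {u : List Bool | u.length = n} ⊆ G ∪ (List.map not) '' G := by
    intro u hu
    have hu : u.length = n := hu
    have hl : (u.map not).length = n := by simpa using hu
    by_cases h : d2 u w ≤ δ u w
    · exact Or.inl ⟨hu, h⟩
    · refine Or.inr ⟨u.map not, ⟨hl, ?_⟩, hinv u⟩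
      have h1 := htri u (u.map not) w
      rw [hcompat u (u.map not) (by simp), ham_not_self, hsymm w] at h1
      have h2 := ham_add w u (by omega)
      simp only [d2, Nat.dist, hl, hu] at h ⊢
      omega
  have h1 := Set.ncard_le_ncard hsub (hfin.union (hfin.image _))
  have h2 := Set.ncard_union_le G ((List.map not) '' G)
  have h3 := Set.ncard_image_le (f := List.map not) hfin
  rw [words_ncard] at h1
  cases n with
  | zero => simp at h1 ⊢; omega
  | succ k => rw [pow_succ] at h1; simp only [Nat.add_sub_cancel]; omega
end
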